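/- arXiv:0801.3946 — 2 statements merged into one kernel-verified Lean document; each statement's English description precedes it below -/
import Mathlib

section
/- Let F be a finite field with q elements. Then the number of matrices g in GL₂(F) with tr(g) = 0 equals q²(q−1), and for every nonzero element r of F the number of matrices g in GL₂(F) with tr(g) = r equals q(q² − q − 1). -/
def gl2TraceEquiv (F : Type*) [Field F] (r : F) :
    {g : GL (Fin 2) F // Matrix.trace (g : Matrix (Fin 2) (Fin 2) F) = r} ≃
      (Σ a : F, Σ b : F, {c : F // b * c ≠ a * (r - a)}) where
  toFun g := ⟨g.1.1 0 0, g.1.1 0 1, g.1.1 1 0, by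
    have h := g.2
    have hd : (g.1.1).det ≠ 0 := ((Matrix.isUnit_iff_isUnit_det _).1 g.1.isUnit).ne_zero
    rw [Matrix.det_fin_two] at hd
    rw [Matrix.trace_fin_two] at h
    intro h2
    apply hd
    linear_combination (g.1.1 0 0) * h - h2⟩
  invFun p := ⟨Matrix.GeneralLinearGroup.mkOfDetNeZero !![p.1, p.2.1; p.2.2.1, r - p.1] (by
    rw [Matrix.det_fin_two_of]
    intro h
    exact p.2.2.2 (by linear_combination -h)), by
    simp [Matrix.GeneralLinearGroup.mkOfDetNeZero, Matrix.trace_fin_two]⟩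
  left_inv g := by
    apply Subtype.ext
    apply Units.ext
    have h := g.2
    rw [Matrix.trace_fin_two] at h
    ext i j
    fin_cases i <;> fin_cases j <;>
      simp [Matrix.GeneralLinearGroup.mkOfDetNeZero, ← h]
  right_inv p := by
    obtain ⟨a, b, c, h⟩ := p
    rfl

open Classical in
theorem gl2_inner_count (F : Type*) [Field F] [Fintype F] (b t : F) :
    Nat.card {c : F // b * c ≠ t} =
      if b = 0 then (if t = 0 then 0 else Fintype.card F) else Fintype.card F - 1 := by
  rw [Nat.card_eq_fintype_card]
  split_ifs with hb ht
  · subst hb; subst ht; simp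
  · subst hb
    simp [Fintype.card_subtype, Ne.symm ht]
  · have : ∀ c, b * c ≠ t ↔ c ≠ t / b := by
      intro c
      rw [Ne, Ne, eq_div_iff hb, mul_comm]
    rw [Fintype.card_congr (Equiv.subtypeEquivRight this)]
    simp [Fintype.card_subtype_compl]

open Classical in
theorem gl2_count (F : Type*) [Field F] [Fintype F] (r : F) :
    Nat.card {g : GL (Fin 2) F // Matrix.trace (g : Matrix (Fin 2) (Fin 2) F) = r} =
      Fintype.card F * (Fintype.card F - 1) ^ 2 +
        (Fintype.card F - ({0, r} : Finset F).card) * Fintype.card F := by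
  rw [Nat.card_congr (gl2TraceEquiv F r), Nat.card_sigma]
  have h1 : ∀ a : F, Nat.card (Σ b : F, {c : F // b * c ≠ a * (r - a)}) =
      (Fintype.card F - 1) ^ 2 + if a ∈ ({0, r} : Finset F)ᶜ then Fintype.card F else 0 := by
    intro a
    rw [Nat.card_sigma]
    simp_rw [gl2_inner_count]
    rw [← Finset.add_sum_erase _ _ (Finset.mem_univ (0 : F)),
      Finset.sum_congr rfl (g := fun _ => Fintype.card F - 1)
        (fun x hx => if_neg (Finset.ne_of_mem_erase hx))]
    have : a * (r - a) = 0 ↔ a = 0 ∨ a = r := by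
      rw [mul_eq_zero, sub_eq_zero, eq_comm (a := r)]
    simp [Finset.card_erase_of_mem, this, sq, add_comm]
    by_cases h0 : a = 0 <;> by_cases hr : a = r <;> simp [h0, hr]
  simp_rw [h1]
  rw [Finset.sum_add_distrib, Finset.sum_ite_mem, Finset.univ_inter, Finset.sum_const,
    Finset.sum_const, Finset.card_compl]
  simp

/-- Let `F` be a finite field with `q` elements. The number of matrices `g ∈ GL₂(F)` with
`tr g = 0` equals `q²(q−1)`, and for every nonzero `r ∈ F` the number of `g ∈ GL₂(F)` with
`tr g = r` equals `q(q² − q − 1)`. -/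
theorem gl2_trace_count (F : Type*) [Field F] [Fintype F] (q : ℕ) (hq : Fintype.card F = q) :
    Nat.card {g : GL (Fin 2) F // Matrix.trace (g : Matrix (Fin 2) (Fin 2) F) = 0}
      = q ^ 2 * (q - 1) ∧
    ∀ r : F, r ≠ 0 →
      Nat.card {g : GL (Fin 2) F // Matrix.trace (g : Matrix (Fin 2) (Fin 2) F) = r}
        = q * (q ^ 2 - q - 1) := by
  classical
  have h2 : 1 < Fintype.card F := Fintype.one_lt_card
  rw [hq] at h2
  obtain ⟨k, rfl⟩ : ∃ k, q = k + 2 := ⟨q - 2, by omega⟩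
  constructor
  · rw [gl2_count, hq]
    simp
    ring
  · intro r hr
    rw [gl2_count, hq, Finset.card_pair (Ne.symm hr)]
    have : (k + 2) ^ 2 - (k + 2) - 1 = k ^ 2 + 3 * k + 1 := by
      have : (k + 2) ^ 2 = k ^ 2 + 3 * k + 1 + 1 + (k + 2) := by ring
      omega
    rw [this]
    simp
    ring
end

section
/- There are absolute constants c > 0 and C > 0 such that for every real x ≥ 16 and every real r with r² ≤ 4x one has c · (4x − r²)^{3/2} / (x log x) ≤ ∫_{max(2, r²/4)}^{x} √(1 − r²/(4t)) / (2√t · log t) dt ≤ C · (4x − r²)^{3/2} / (x log x). -/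
lemma aux_rpow (d : ℝ) (hd : 0 ≤ d) : (4 * d) ^ ((3 : ℝ) / 2) = 8 * (d * Real.sqrt d) := by
  have h : (3 : ℝ) / 2 = 1 + 1 / 2 := by norm_num
  have h4 : Real.sqrt 4 = 2 := by
    rw [show (4 : ℝ) = 2 ^ 2 by norm_num]; exact Real.sqrt_sq (by norm_num)
  rw [h, Real.rpow_add_of_nonneg (by positivity) (by norm_num) (by norm_num), Real.rpow_one,
    ← Real.sqrt_eq_rpow, Real.sqrt_mul (by norm_num), h4]
  ring

lemma aux_log (t x : ℝ) (ht : 2 ≤ t) (hx : t ≤ x) :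
    1 / Real.log t ≤ 7 * (x / t) ^ ((1 : ℝ) / 4) / Real.log x := by
  have hlt : 0.6931 < Real.log t :=
    lt_of_lt_of_le (by linarith [Real.log_two_gt_d9]) (Real.log_le_log (by norm_num) ht)
  have hlx : Real.log t ≤ Real.log x := Real.log_le_log (by linarith) hx
  have h1 : Real.log (x / t) ≤ (x / t) ^ ((1 : ℝ) / 4) / (1 / 4) :=
    Real.log_le_rpow_div (div_nonneg (by linarith) (by linarith)) (by norm_num)
  rw [Real.log_div (by linarith) (by linarith)] at h1
  have h2 : 1 ≤ (x / t) ^ ((1 : ℝ) / 4) :=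
    Real.one_le_rpow ((one_le_div (by linarith)).2 hx) (by norm_num)
  rw [div_le_div_iff₀ (by linarith) (by linarith)]
  nlinarith

lemma aux_upper (a x m : ℝ) (hx : 16 ≤ x) (ha : 0 ≤ a) (hm : 2 ≤ m) (ham : a ≤ m) (hmx : m ≤ x)
    (hint : IntervalIntegrable
      (fun t => Real.sqrt (1 - a / t) / (2 * Real.sqrt t * Real.log t)) MeasureTheory.volume m x) :
    (∫ t in m..x, Real.sqrt (1 - a / t) / (2 * Real.sqrt t * Real.log t))
      ≤ 14 * ((x - a) * Real.sqrt (x - a)) / (x * Real.log x) := by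
  have hlx : 0 < Real.log x := Real.log_pos (by linarith)
  have hx0 : 0 < x := by linarith
  set K : ℝ := Real.sqrt (x - a) / Real.sqrt x * (7 * x ^ ((1 : ℝ) / 4) / Real.log x) / 2 with hK
  have hK0 : 0 ≤ K := by positivity
  have hi2 : IntervalIntegrable (fun t : ℝ => K * t ^ (-(3 : ℝ) / 4)) MeasureTheory.volume m x :=
    (intervalIntegral.intervalIntegrable_rpow' (by norm_num)).const_mul K
  have h1 : (∫ t in m..x, Real.sqrt (1 - a / t) / (2 * Real.sqrt t * Real.log t))
      ≤ ∫ t in m..x, K * t ^ (-(3 : ℝ) / 4) := by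
    apply intervalIntegral.integral_mono_on hmx hint hi2
    intro t ⟨htm, htx⟩
    have ht0 : 0 < t := by linarith
    have hlt : 0 < Real.log t := Real.log_pos (by linarith)
    have e1 : Real.sqrt (1 - a / t) ≤ Real.sqrt (x - a) / Real.sqrt x := by
      rw [← Real.sqrt_div (by linarith)]
      apply Real.sqrt_le_sqrt
      rw [sub_div, div_self hx0.ne']
      have : a / x ≤ a / t := by gcongr
      linarith
    have e2 := aux_log t x (by linarith) htx
    have e3 : t ^ (-(3 : ℝ) / 4) = (1 / t ^ ((1 : ℝ) / 4)) * (1 / Real.sqrt t) := by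
      rw [Real.sqrt_eq_rpow, one_div (t ^ _), one_div (t ^ _), ← Real.rpow_neg ht0.le, ← Real.rpow_neg ht0.le,
        ← Real.rpow_add ht0]
      norm_num
    have e4 : (x / t) ^ ((1 : ℝ) / 4) = x ^ ((1 : ℝ) / 4) / t ^ ((1 : ℝ) / 4) :=
      Real.div_rpow hx0.le ht0.le _
    calc Real.sqrt (1 - a / t) / (2 * Real.sqrt t * Real.log t)
        = Real.sqrt (1 - a / t) * (1 / Real.log t) * (1 / Real.sqrt t) / 2 := by field_simp
      _ ≤ (Real.sqrt (x - a) / Real.sqrt x) * (7 * (x / t) ^ ((1 : ℝ) / 4) / Real.log x)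
            * (1 / Real.sqrt t) / 2 := by gcongr
      _ = K * t ^ (-(3 : ℝ) / 4) := by rw [hK, e3, e4]; ring
  refine h1.trans ?_
  rw [intervalIntegral.integral_const_mul, integral_rpow (Or.inl (by norm_num))]
  have hq : (-(3 : ℝ) / 4 + 1) = 1 / 4 := by norm_num
  rw [hq]
  set X := x ^ ((1 : ℝ) / 4) with hX
  have hX0 : 0 < X := by positivity
  have hXX : X * X = Real.sqrt x := by
    rw [hX, ← Real.rpow_add hx0, Real.sqrt_eq_rpow]; norm_num
  have hM : m / x * X ≤ m ^ ((1 : ℝ) / 4) := by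
    have : m / x ≤ (m / x) ^ ((1 : ℝ) / 4) := by
      apply Real.self_le_rpow_of_le_one (by positivity) ((div_le_one hx0).2 hmx) (by norm_num)
    rw [Real.div_rpow (by linarith) hx0.le, ← hX] at this
    rwa [le_div_iff₀ hX0] at this
  have hD : X - m ^ ((1 : ℝ) / 4) ≤ (x - a) / x * X := by
    have : (x - m) / x * X ≤ (x - a) / x * X := by gcongr
    have h' : (x - m) / x * X = X - m / x * X := by field_simp
    linarith
  have hs0 : 0 < Real.sqrt x := Real.sqrt_pos.2 hx0
  calc K * ((X - m ^ ((1 : ℝ) / 4)) / (1 / 4)) ≤ K * (((x - a) / x * X) / (1 / 4)) := by gcongr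
    _ = 14 * (x - a) * Real.sqrt (x - a) * (X * X) / (Real.sqrt x * x * Real.log x) := by
        rw [hK]; field_simp; ring
    _ = 14 * ((x - a) * Real.sqrt (x - a)) / (x * Real.log x) := by
        rw [hXX]; field_simp

lemma aux_lower (a x m : ℝ) (hx : 16 ≤ x) (ha : 0 ≤ a) (hm : 2 ≤ m) (ham : a ≤ m) (hmx : m ≤ x)
    (h7 : 7 / 8 * (x - a) ≤ x - m)
    (hint : IntervalIntegrable
      (fun t => Real.sqrt (1 - a / t) / (2 * Real.sqrt t * Real.log t)) MeasureTheory.volume m x) :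
    (1 / 8) * ((x - a) * Real.sqrt (x - a)) / (x * Real.log x) ≤
    (∫ t in m..x, Real.sqrt (1 - a / t) / (2 * Real.sqrt t * Real.log t)) := by
  have hlx : 0 < Real.log x := Real.log_pos (by linarith)
  have hx0 : 0 < x := by linarith
  set p := (m + x) / 2 with hp
  have hmp : m ≤ p := by linarith
  have hpx : p ≤ x := by linarith
  have i1 := hint.mono_set (c := m) (d := p) (by
    rw [Set.uIcc_of_le hmp, Set.uIcc_of_le hmx]; exact Set.Icc_subset_Icc_right hpx)
  have i2 := hint.mono_set (c := p) (d := x) (by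
    rw [Set.uIcc_of_le hpx, Set.uIcc_of_le hmx]; exact Set.Icc_subset_Icc_left hmp)
  rw [← intervalIntegral.integral_add_adjacent_intervals i1 i2]
  have n1 : 0 ≤ ∫ t in m..p, Real.sqrt (1 - a / t) / (2 * Real.sqrt t * Real.log t) := by
    apply intervalIntegral.integral_nonneg hmp
    intro t ht
    have : 0 < Real.log t := Real.log_pos (by linarith [ht.1])
    positivity
  have n2 : (∫ t in p..x, Real.sqrt (p - a) / (2 * x * Real.log x)) ≤
      ∫ t in p..x, Real.sqrt (1 - a / t) / (2 * Real.sqrt t * Real.log t) := by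
    apply intervalIntegral.integral_mono_on hpx (by simp) i2
    intro t ⟨htp, htx⟩
    have ht0 : 0 < t := by linarith
    have hlt : 0 < Real.log t := Real.log_pos (by linarith)
    have e : Real.sqrt (1 - a / t) / (2 * Real.sqrt t * Real.log t)
        = Real.sqrt (t - a) / (2 * t * Real.log t) := by
      have : 1 - a / t = (t - a) / t := by field_simp
      rw [this, Real.sqrt_div (by linarith), div_div]
      congr 1
      have := Real.mul_self_sqrt ht0.le
      linear_combination 2 * Real.log t * this
    rw [e]
    gcongr
  rw [intervalIntegral.integral_const, smul_eq_mul] at n2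
  have n3 : (2 / 3) * Real.sqrt (x - a) ≤ Real.sqrt (p - a) := by
    apply Real.le_sqrt_of_sq_le
    rw [mul_pow, Real.sq_sqrt (by linarith)]
    linarith
  have n4 : (1 / 8) * ((x - a) * Real.sqrt (x - a)) / (x * Real.log x) ≤
      (x - p) * (Real.sqrt (p - a) / (2 * x * Real.log x)) := by
    calc (1 / 8) * ((x - a) * Real.sqrt (x - a)) / (x * Real.log x)
        = (3 / 8 * (x - a)) * ((2 / 3 * Real.sqrt (x - a)) / (2 * x * Real.log x)) := by
          field_simp
      _ ≤ _ := by
          have : 3 / 8 * (x - a) ≤ x - p := by linarith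
          have : 0 ≤ x - p := by linarith
          gcongr
  linarith

/-- There are absolute constants `c, C > 0` such that for all real `x ≥ 16` and real `r` with
`r² ≤ 4x`, `∫_{max(2,r²/4)}^x √(1 − r²/(4t))/(2√t log t) dt` is between
`c (4x − r²)^{3/2}/(x log x)` and `C (4x − r²)^{3/2}/(x log x)`. -/
theorem refined_main_term_order_nonCM :
    ∃ c C : ℝ, 0 < c ∧ 0 < C ∧ ∀ x : ℝ, 16 ≤ x → ∀ r : ℝ, r ^ 2 ≤ 4 * x →
      c * (4 * x - r ^ 2) ^ ((3 : ℝ) / 2) / (x * Real.log x)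
        ≤ (∫ t in (max 2 (r ^ 2 / 4))..x,
            Real.sqrt (1 - r ^ 2 / (4 * t)) / (2 * Real.sqrt t * Real.log t)) ∧
      (∫ t in (max 2 (r ^ 2 / 4))..x,
          Real.sqrt (1 - r ^ 2 / (4 * t)) / (2 * Real.sqrt t * Real.log t))
        ≤ C * (4 * x - r ^ 2) ^ ((3 : ℝ) / 2) / (x * Real.log x) := by
  refine ⟨1 / 64, 14 / 8, by norm_num, by norm_num, ?_⟩
  intro x hx r hr
  set a := r ^ 2 / 4 with ha
  have ha0 : 0 ≤ a := by positivity
  have hr4 : r ^ 2 = 4 * a := by rw [ha]; ring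
  have hax : a ≤ x := by linarith
  have hdiv : ∀ t : ℝ, r ^ 2 / (4 * t) = a / t := by
    intro t; rw [hr4]; exact mul_div_mul_left _ _ (by norm_num)
  have hd : 4 * x - r ^ 2 = 4 * (x - a) := by rw [hr4]; ring
  simp only [hdiv]
  rw [hd, aux_rpow _ (by linarith)]
  have hm2 : 2 ≤ max 2 a := le_max_left _ _
  have hma : a ≤ max 2 a := le_max_right _ _
  have hmx : max 2 a ≤ x := max_le (by linarith) hax
  have h7 : 7 / 8 * (x - a) ≤ x - max 2 a := by
    rcases max_cases 2 a with h | h <;> rw [h.1] <;> linarith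
  have hint : IntervalIntegrable
      (fun t => Real.sqrt (1 - a / t) / (2 * Real.sqrt t * Real.log t))
      MeasureTheory.volume (max 2 a) x := by
    apply ContinuousOn.intervalIntegrable
    rw [Set.uIcc_of_le hmx]
    have h0 : ∀ t ∈ Set.Icc (max 2 a) x, t ≠ 0 := fun t ht => by
      have := ht.1; linarith
    apply ContinuousOn.div
    · exact (continuousOn_const.sub (continuousOn_const.div continuousOn_id h0)).sqrt
    · exact (continuousOn_const.mul Real.continuous_sqrt.continuousOn).mul
        (Real.continuousOn_log.mono fun t ht => h0 t ht)
    · intro t ht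
      have h1 := ht.1
      have : 0 < Real.log t := Real.log_pos (by linarith)
      have : 0 < Real.sqrt t := Real.sqrt_pos.2 (by linarith)
      positivity
  constructor
  · refine le_trans (le_of_eq ?_) (aux_lower a x _ hx ha0 hm2 hma hmx h7 hint)
    ring
  · refine (aux_upper a x _ hx ha0 hm2 hma hmx hint).trans (le_of_eq ?_)
    ring
end
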